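/- (Monotonicity of the phase radius) Let (θ_1,...,θ_N) be a global solution of the Winfree model of order n with identical natural frequencies ν_i = ν > 0 for all i and coupling strength 0 < κ < ν/(2^n a_n). Suppose M and m are indices such that θ_M(t) = max_i θ_i(t) and θ_m(t) = min_i θ_i(t) for all t ≥ 0, and set A(t) := (θ_M(t) + θ_m(t))/2, R(t) := (θ_M(t) − θ_m(t))/2, and I_{n,c}(t) := (1/N) Σ_{j=1}^N I_n(θ_j(t)). Then R'(t) = −κ I_{n,c}(t) cos A(t) sin R(t) for all t ≥ 0; moreover, if at some time t one has 0 < R(t) ≤ π/2, then R'(t) < 0 whenever cos A(t) > 0, and R'(t) > 0 whenever cos A(t) < 0. -/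

import Mathlib

open Real Filter

/-- Normalizing constant `a_n = 2^n (n!)^2 / (2n)!`. -/
noncomputable def aW (n : ℕ) : ℝ :=
  2 ^ n * (Nat.factorial n : ℝ) ^ 2 / (Nat.factorial (2 * n) : ℝ)

/-- Influence function `I_n(θ) = a_n (1 + cos θ)^n`. -/
noncomputable def influence (n : ℕ) (θ : ℝ) : ℝ := aW n * (1 + Real.cos θ) ^ n

/-- Sensitivity function `S(θ) = -sin θ`. -/
noncomputable def sens (θ : ℝ) : ℝ := -Real.sin θ

/-- A global solution of the Winfree model of order `n` with `N` oscillators,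
natural frequencies `ν` and coupling strength `κ`:
`θ_i'(t) = ν_i + (κ/N) S(θ_i(t)) Σ_j I_n(θ_j(t))` for all `t ≥ 0`. -/
def IsWinfreeSol (n N : ℕ) (ν : Fin N → ℝ) (κ : ℝ) (θ : Fin N → ℝ → ℝ) : Prop :=
  ∀ i : Fin N, ∀ t : ℝ, 0 ≤ t →
    HasDerivAt (θ i)
      (ν i + (κ / N) * sens (θ i t) * ∑ j : Fin N, influence n (θ j t)) t

/-!
Subtracting the equations of two oscillators with equal natural frequencies and applying
sum-to-product to the sines gives `R' = -κ I_{n,c} cos A sin R`. When `sin R > 0` the two phases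
cannot both be odd multiples of `π`, the only points where the influence can vanish; hence
`I_{n,c} > 0` and `R'` has the sign opposite to that of `cos A`.
-/

/-- The order parameter `I_{n,c} = (1/N) Σ_j I_n(φ_j)`, as a function of the phase configuration
`φ`. -/
noncomputable def meanInfluence (n : ℕ) {N : ℕ} (φ : Fin N → ℝ) : ℝ :=
  (1 / (N : ℝ)) * ∑ j, influence n (φ j)

/-- The midpoint `A = (θ_i + θ_j)/2` of two phases, for an arbitrary pair of oscillators rather than
only the extremal one. -/
noncomputable def phaseCenter {N : ℕ} (θ : Fin N → ℝ → ℝ) (i j : Fin N) (t : ℝ) : ℝ :=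
  (θ i t + θ j t) / 2

/-- The signed half-distance `R = (θ_i - θ_j)/2` of two phases, for an arbitrary pair of
oscillators; it is the phase radius when `i` is maximal and `j` minimal. -/
noncomputable def phaseRadius {N : ℕ} (θ : Fin N → ℝ → ℝ) (i j : Fin N) (t : ℝ) : ℝ :=
  (θ i t - θ j t) / 2

theorem sin_half_sub_eq_zero_of_cos_eq_neg_one {x y : ℝ} (hx : cos x = -1) (hy : cos y = -1) :
    sin ((x - y) / 2) = 0 := by
  have hsin : sin x = 0 := sin_eq_zero_iff_cos_eq.2 (Or.inr hx)
  have hcos : cos (x - y) = 1 := by rw [cos_sub, hx, hy, hsin]; ring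
  have hsq : sin ((x - y) / 2) ^ 2 = 0 := by
    rw [sin_sq_eq_half_sub, mul_div_cancel₀ _ two_ne_zero, hcos, sub_self]
  exact pow_eq_zero_iff two_ne_zero |>.1 hsq

theorem aW_pos (n : ℕ) : 0 < aW n := by
  unfold aW
  positivity

theorem influence_nonneg (n : ℕ) (x : ℝ) : 0 ≤ influence n x :=
  mul_nonneg (aW_pos n).le (pow_nonneg (by linarith [neg_one_le_cos x]) n)

theorem influence_pos (n : ℕ) {x : ℝ} (hx : cos x ≠ -1) : 0 < influence n x := by
  have hlt : -1 < cos x := (neg_one_le_cos x).lt_of_ne' hx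
  exact mul_pos (aW_pos n) (pow_pos (by linarith) n)

section Mean

variable {N : ℕ} (n : ℕ) {φ : Fin N → ℝ}

theorem meanInfluence_pos (h : ∃ i, cos (φ i) ≠ -1) : 0 < meanInfluence n φ := by
  obtain ⟨i, hi⟩ := h
  have hN : (0 : ℝ) < N := Nat.cast_pos.2 i.pos
  have hsum : 0 < ∑ j, influence n (φ j) :=
    Finset.sum_pos' (fun j _ ↦ influence_nonneg n (φ j)) ⟨i, Finset.mem_univ i, influence_pos n hi⟩
  exact mul_pos (one_div_pos.2 hN) hsum

theorem meanInfluence_pos_of_sin_half_sub_ne_zero {i j : Fin N}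
    (h : sin ((φ i - φ j) / 2) ≠ 0) : 0 < meanInfluence n φ := by
  apply meanInfluence_pos
  contrapose! h
  exact sin_half_sub_eq_zero_of_cos_eq_neg_one (h i) (h j)

end Mean

namespace IsWinfreeSol

variable {n N : ℕ} {ν : Fin N → ℝ} {κ : ℝ} {θ : Fin N → ℝ → ℝ} {i j : Fin N} {t : ℝ}

theorem hasDerivAt_phase (hθ : IsWinfreeSol n N ν κ θ) (i : Fin N) (ht : 0 ≤ t) :
    HasDerivAt (θ i) (ν i - κ * meanInfluence n (θ · t) * sin (θ i t)) t :=
  (hθ i t ht).congr_deriv (by unfold sens meanInfluence; ring)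

theorem hasDerivAt_phaseRadius (hθ : IsWinfreeSol n N ν κ θ) (i j : Fin N) (ht : 0 ≤ t) :
    HasDerivAt (phaseRadius θ i j)
      ((ν i - ν j) / 2 - κ * meanInfluence n (θ · t) *
        cos (phaseCenter θ i j t) * sin (phaseRadius θ i j t)) t := by
  have hsin : sin (θ i t) - sin (θ j t) =
      2 * sin (phaseRadius θ i j t) * cos (phaseCenter θ i j t) :=
    sin_sub_sin (θ i t) (θ j t)
  refine (((hθ.hasDerivAt_phase i ht).sub (hθ.hasDerivAt_phase j ht)).div_const 2).congr_deriv ?_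
  linear_combination -(κ * meanInfluence n (θ · t) / 2) * hsin

theorem hasDerivAt_phaseRadius_of_eq (hθ : IsWinfreeSol n N ν κ θ) (hν : ν i = ν j) (ht : 0 ≤ t) :
    HasDerivAt (phaseRadius θ i j)
      (-κ * meanInfluence n (θ · t) * cos (phaseCenter θ i j t) * sin (phaseRadius θ i j t)) t :=
  (hθ.hasDerivAt_phaseRadius i j ht).congr_deriv (by rw [hν]; ring)

theorem exists_pos_deriv_phaseRadius_eq_neg_mul_cos (hθ : IsWinfreeSol n N ν κ θ) (hκ : 0 < κ)
    (hν : ν i = ν j) (ht : 0 ≤ t) (hR : 0 < sin (phaseRadius θ i j t)) :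
    ∃ c > 0, deriv (phaseRadius θ i j) t = -(c * cos (phaseCenter θ i j t)) := by
  have hI : 0 < meanInfluence n (θ · t) := meanInfluence_pos_of_sin_half_sub_ne_zero n hR.ne'
  refine ⟨κ * meanInfluence n (θ · t) * sin (phaseRadius θ i j t), by positivity, ?_⟩
  rw [(hθ.hasDerivAt_phaseRadius_of_eq hν ht).deriv]
  ring

end IsWinfreeSol

theorem stmt14_general {n N : ℕ} {ν : Fin N → ℝ} {κ : ℝ} (hκ : 0 < κ) {θ : Fin N → ℝ → ℝ}
    (hθ : IsWinfreeSol n N ν κ θ) {i j : Fin N} (hν : ν i = ν j) {t : ℝ} (ht : 0 ≤ t) :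
    HasDerivAt (phaseRadius θ i j)
      (-κ * meanInfluence n (θ · t) * cos (phaseCenter θ i j t) * sin (phaseRadius θ i j t)) t ∧
    (0 < sin (phaseRadius θ i j t) →
      (0 < cos (phaseCenter θ i j t) → deriv (phaseRadius θ i j) t < 0) ∧
      (cos (phaseCenter θ i j t) < 0 → 0 < deriv (phaseRadius θ i j) t)) := by
  refine ⟨hθ.hasDerivAt_phaseRadius_of_eq hν ht, fun hR ↦ ?_⟩
  obtain ⟨c, hc, hderiv⟩ := hθ.exists_pos_deriv_phaseRadius_eq_neg_mul_cos hκ hν ht hR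
  rw [hderiv]
  exact ⟨fun hA ↦ neg_neg_of_pos (mul_pos hc hA),
    fun hA ↦ neg_pos_of_neg (mul_neg_of_pos_of_neg hc hA)⟩

/-- Monotonicity of the phase radius `R(t) = (θ_M(t) − θ_m(t))/2`:
`R'(t) = −κ I_{n,c}(t) cos A(t) sin R(t)`, and `R` strictly decreases
(resp. increases) when `0 < R(t) ≤ π/2` and `cos A(t) > 0` (resp. `< 0`). -/
theorem stmt14 (n N : ℕ) (hn : 0 < n) (hN : 0 < N) (ν : ℝ) (hν : 0 < ν) (κ : ℝ)
    (hκ0 : 0 < κ) (hκ : κ < ν / (2 ^ n * aW n))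
    (θ : Fin N → ℝ → ℝ) (hθ : IsWinfreeSol n N (fun _ => ν) κ θ)
    (M m : Fin N)
    (hM : ∀ t : ℝ, 0 ≤ t → ∀ i : Fin N, θ i t ≤ θ M t)
    (hm : ∀ t : ℝ, 0 ≤ t → ∀ i : Fin N, θ m t ≤ θ i t) :
    ∀ t : ℝ, 0 ≤ t →
      HasDerivAt (fun s => (θ M s - θ m s) / 2)
        (-κ * ((1 / (N : ℝ)) * ∑ j : Fin N, influence n (θ j t)) *
          Real.cos ((θ M t + θ m t) / 2) * Real.sin ((θ M t - θ m t) / 2)) t ∧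
      (0 < (θ M t - θ m t) / 2 → (θ M t - θ m t) / 2 ≤ Real.pi / 2 →
        ((0 < Real.cos ((θ M t + θ m t) / 2) →
            deriv (fun s => (θ M s - θ m s) / 2) t < 0) ∧
         (Real.cos ((θ M t + θ m t) / 2) < 0 →
            0 < deriv (fun s => (θ M s - θ m s) / 2) t))) := by
  intro t ht
  refine (stmt14_general hκ0 hθ (i := M) (j := m) rfl ht).imp_right fun hsign hR hle ↦ ?_
  exact hsign (sin_pos_of_pos_of_lt_pi hR (hle.trans_lt (half_lt_self pi_pos)))
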